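/- (Lemma 2.2) Let u ∈ ℝ[x_1,…,x_d] have total degree at most 4, let v ∈ P_A, and let w ∈ P_A satisfy w(a) = u(a) and ∇w(a) = ∇u(a) at every vertex a of K (the Adini canonical interpolant of u). Then Σ_{k=1}^d Σ_{l=1}^d ∫_K ∂²(u − w)/∂x_k∂x_l · ∂²v/∂x_k∂x_l dx = − Σ_{i=1}^d Σ_{j ≠ i} (h_j²/3) ∫_K ∂⁴u/∂x_i²∂x_j² · ∂²v/∂x_i² dx. -/

import Mathlib

open MvPolynomial MeasureTheory

/-- `Q₁`: the span of the monomials `x^α` with `α i ≤ 1` for every `i`. -/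
noncomputable def Q1 (d : ℕ) : Submodule ℝ (MvPolynomial (Fin d) ℝ) :=
  Submodule.span ℝ {p | ∃ α : Fin d →₀ ℕ, (∀ i, α i ≤ 1) ∧ p = monomial α (1 : ℝ)}

/-- The Adini shape function space `P_A = Q₁ + span{x_i² q : 1 ≤ i ≤ d, q ∈ Q₁}`. -/
noncomputable def PA (d : ℕ) : Submodule ℝ (MvPolynomial (Fin d) ℝ) :=
  Q1 d ⊔ Submodule.span ℝ {p | ∃ i : Fin d, ∃ q ∈ Q1 d, p = X i ^ 2 * q}

/-- `Q₁^i`: elements of `Q₁` of degree 0 in `x_i`. -/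
noncomputable def Q1i (d : ℕ) (i : Fin d) : Submodule ℝ (MvPolynomial (Fin d) ℝ) :=
  Submodule.span ℝ
    {p | ∃ α : Fin d →₀ ℕ, (∀ j, α j ≤ 1) ∧ α i = 0 ∧ p = monomial α (1 : ℝ)}

/-- `S^i = span{((x_j − c_j)² − h_j²) q̂ : 1 ≤ j ≤ d, q̂ ∈ Q₁^i}`. -/
noncomputable def Si (d : ℕ) (c h : Fin d → ℝ) (i : Fin d) :
    Submodule ℝ (MvPolynomial (Fin d) ℝ) :=
  Submodule.span ℝ
    {p | ∃ j : Fin d, ∃ q ∈ Q1i d i, p = ((X j - C (c j)) ^ 2 - C (h j ^ 2)) * q}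

/-- The vertices of the `d`-rectangle with centre `c` and half-lengths `h`. -/
def IsVertex {d : ℕ} (c h : Fin d → ℝ) (a : Fin d → ℝ) : Prop :=
  ∀ i, a i = c i - h i ∨ a i = c i + h i

/-- The `d`-rectangle `K = ∏_i [c_i − h_i, c_i + h_i]`. -/
def box {d : ℕ} (c h : Fin d → ℝ) : Set (Fin d → ℝ) :=
  Set.univ.pi fun i => Set.Icc (c i - h i) (c i + h i)

/-- The iterated partial derivative `∂^α`. -/
noncomputable def pderivPow {d : ℕ} (α : Fin d → ℕ) :
    MvPolynomial (Fin d) ℝ →ₗ[ℝ] MvPolynomial (Fin d) ℝ :=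
  (List.ofFn fun i : Fin d =>
    ((pderiv (R := ℝ) i).toLinearMap :
        Module.End ℝ (MvPolynomial (Fin d) ℝ)) ^ α i).prod

/-!
Write `b_i = (x_i - c_i)² - h_i²`. Every polynomial of degree at most four is an element of `P_A`
plus a combination of products `b_i b_j`, and these products have vanishing vertex values and
gradients. The space `P_A` is unisolvent: along an edge its elements are cubic, so zero vertex data
force `∂_i² z = 0` at the vertices, and `∂_i² z ∈ Q₁` is determined by its vertex values. Hence
`u - w` is a combination of products `b_i b_j`. Since `∂_k² ∂_l²` annihilates `P_A`, integrating by
parts twice removes every mixed term, and the diagonal terms reduce to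
`∫ b_j q = -(2 h_j² / 3) ∫ q`, valid when `∂_j² q = 0`.
-/

section Polynomial

variable {σ R : Type*}

lemma pderiv_pderiv_comm [CommSemiring R] (i j : σ) (p : MvPolynomial σ R) :
    pderiv i (pderiv j p) = pderiv j (pderiv i p) := by
  ext m
  rw [coeff_pderiv, coeff_pderiv, coeff_pderiv, coeff_pderiv, add_right_comm]
  rcases eq_or_ne i j with rfl | hij
  · rfl
  · simp [hij, hij.symm, mul_right_comm]

lemma pderiv_pderiv_pderiv_pderiv_comm [CommSemiring R] (i j : σ) (p : MvPolynomial σ R) :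
    pderiv i (pderiv i (pderiv j (pderiv j p))) = pderiv j (pderiv j (pderiv i (pderiv i p))) := by
  rw [pderiv_pderiv_comm i j (pderiv j p), pderiv_pderiv_comm i j p, pderiv_pderiv_comm i j,
    pderiv_pderiv_comm i j]

lemma coeff_pderiv_pderiv_self [CommSemiring R] (i : σ) (p : MvPolynomial σ R) (m : σ →₀ ℕ) :
    coeff m (pderiv i (pderiv i p)) =
      coeff (m + Finsupp.single i 2) p * ((m i + 2) * (m i + 1)) := by
  rw [coeff_pderiv, coeff_pderiv, add_assoc, ← Finsupp.single_add]
  simp [add_assoc, one_add_one_eq_two, mul_assoc]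

lemma eval_update_of_notMem_vars [CommSemiring R] [DecidableEq σ] {i : σ}
    {p : MvPolynomial σ R} (hi : i ∉ p.vars) (a : σ → R) (t : R) :
    eval (Function.update a i t) p = eval a p :=
  eval₂Hom_congr' rfl
    (fun _ hj _ => Function.update_of_ne (ne_of_mem_of_not_mem hj hi) _ _) rfl

lemma exists_monomial_eq_X_pow_mul [CommSemiring R] (i : σ) (α : σ →₀ ℕ) (r : R) :
    ∃ q : MvPolynomial σ R, i ∉ q.vars ∧ monomial α r = X i ^ α i * q := by
  refine ⟨monomial (α.erase i) r, ?_, ?_⟩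
  · intro hi
    obtain ⟨β, hβ, hiβ⟩ := (mem_vars_iff_mem_support i).1 hi
    rw [Finset.mem_singleton.1 (support_monomial_subset hβ)] at hiβ
    simp at hiβ
  · rw [X_pow_eq_monomial, monomial_mul, one_mul, Finsupp.single_add_erase]

lemma sq_mul_eval_pderiv_pderiv_X_pow_mul [CommRing R] [DecidableEq σ] {i : σ} {n : ℕ}
    (hn : n ≤ 3) {q : MvPolynomial σ R} (hq : i ∉ q.vars) (a : σ → R) (t : R) :
    (a i - t) ^ 2 * eval a (pderiv i (pderiv i (X i ^ n * q))) =
      (a i - t) * (4 * eval a (pderiv i (X i ^ n * q)) +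
          2 * eval (Function.update a i t) (pderiv i (X i ^ n * q))) -
        6 * (eval a (X i ^ n * q) - eval (Function.update a i t) (X i ^ n * q)) := by
  have hpderiv (m : ℕ) : pderiv i (X i ^ m * q) = m • (X i ^ (m - 1) * q) := by
    rw [pderiv_mul, pderiv_pow, pderiv_X_self, pderiv_eq_zero_of_notMem_vars hq, nsmul_eq_mul]
    ring
  simp only [hpderiv, map_nsmul, map_mul, map_pow, eval_X, Function.update_self,
    eval_update_of_notMem_vars hq]
  interval_cases n <;> norm_num <;> ring

/-- The Hermite data of a cubic at the two ends of a segment determine its second derivative there.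
-/
lemma sq_mul_eval_pderiv_pderiv_of_degreeOf_le_three [CommRing R] [DecidableEq σ] {i : σ}
    {p : MvPolynomial σ R} (hp : p.degreeOf i ≤ 3) (a : σ → R) (t : R) :
    (a i - t) ^ 2 * eval a (pderiv i (pderiv i p)) =
      (a i - t) * (4 * eval a (pderiv i p) + 2 * eval (Function.update a i t) (pderiv i p)) -
        6 * (eval a p - eval (Function.update a i t) p) := by
  rw [p.as_sum]
  simp only [map_sum, Finset.mul_sum, ← Finset.sum_add_distrib, ← Finset.sum_sub_distrib]
  refine Finset.sum_congr rfl fun α hα => ?_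
  obtain ⟨q, hq, hmonomial⟩ := exists_monomial_eq_X_pow_mul i α (coeff α p)
  rw [hmonomial]
  exact sq_mul_eval_pderiv_pderiv_X_pow_mul (degreeOf_le_iff.1 hp α hα) hq a t

lemma hasFDerivAt_eval {𝕜 : Type*} [NontriviallyNormedField 𝕜] [Fintype σ]
    (p : MvPolynomial σ 𝕜) (x : σ → 𝕜) :
    HasFDerivAt (fun y => eval y p)
      (∑ i, eval x (pderiv i p) • (ContinuousLinearMap.proj i : (σ → 𝕜) →L[𝕜] 𝕜)) x := by
  classical
  induction p using MvPolynomial.induction_on with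
  | C r =>
    simp only [eval_C]
    refine (hasFDerivAt_const (𝕜 := 𝕜) r x).congr_fderiv ?_
    ext y
    simp
  | add p q hp hq =>
    simp only [map_add]
    refine (hp.fun_add hq).congr_fderiv ?_
    ext y
    simp [add_mul, Finset.sum_add_distrib]
  | mul_X p i hp =>
    simp only [map_mul, eval_X]
    refine (hp.mul (hasFDerivAt_apply i x)).congr_fderiv ?_
    ext y
    simp [pderiv_X, Pi.single_apply, add_mul, Finset.sum_add_distrib, Finset.mul_sum, apply_ite,
      mul_assoc]

end Polynomial

lemma integral_Icc_eval_pderiv_eq_zero {d : ℕ} {a b : Fin d → ℝ} (hab : a ≤ b) {i : Fin d}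
    {p : MvPolynomial (Fin d) ℝ} (ha : ∀ x, x i = a i → eval x p = 0)
    (hb : ∀ x, x i = b i → eval x p = 0) :
    ∫ x in Set.Icc a b, eval x (pderiv i p) = 0 := by
  obtain ⟨n, rfl⟩ := Nat.exists_eq_add_one.mpr i.pos
  let P : Fin (n + 1) → MvPolynomial (Fin (n + 1)) ℝ := Pi.single i p
  let grad (q : MvPolynomial (Fin (n + 1)) ℝ) (x : Fin (n + 1) → ℝ) : (Fin (n + 1) → ℝ) →L[ℝ] ℝ :=
    ∑ k, eval x (pderiv k q) • ContinuousLinearMap.proj k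
  have hdiv (x : Fin (n + 1) → ℝ) :
      ∑ j, grad (P j) x (Pi.single j 1) = eval x (pderiv i p) := by
    rw [Finset.sum_eq_single i (fun j _ hj => by simp [grad, P, hj]) (by simp)]
    simp [grad, P, Pi.single_apply]
  have hflux := integral_divergence_of_hasFDerivAt_off_countable' a b hab
    (fun j x => eval x (P j)) (fun j x => grad (P j) x) ∅ Set.countable_empty
    (fun j => (continuous_eval (P j)).continuousOn)
    (fun x _ j => hasFDerivAt_eval (P j) x)
    (by simpa only [hdiv] using (continuous_eval (pderiv i p)).integrableOn_Icc)
  simp only [hdiv] at hflux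
  rw [hflux]
  refine Finset.sum_eq_zero fun j _ => ?_
  rcases eq_or_ne j i with rfl | hj
  · simp [P, ha, hb]
  · simp [P, hj]

section ShapeFunctions

variable {d : ℕ}

/-- The exponents of the monomials spanning the Adini space: those `α` for which `x^α` is not
divisible by any `x_i² x_j²`, where `i = j` is allowed. -/
def adiniExponents (d : ℕ) : Set (Fin d →₀ ℕ) :=
  {α | ∀ i j, ¬ Finsupp.single i 2 + Finsupp.single j 2 ≤ α}

lemma Q1_eq_restrictSupport : Q1 d = restrictSupport ℝ {α | ∀ i, α i ≤ 1} := by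
  rw [restrictSupport_eq_span, Q1]
  congr 1
  ext p
  simp only [Set.mem_ofPred_eq, Set.mem_image, eq_comm]

lemma mem_Q1_iff {q : MvPolynomial (Fin d) ℝ} :
    q ∈ Q1 d ↔ ∀ α ∈ q.support, ∀ i, α i ≤ 1 := by
  rw [Q1_eq_restrictSupport]
  rfl

lemma single_add_mem_adiniExponents {α : Fin d →₀ ℕ} (hα : ∀ i, α i ≤ 1) (i : Fin d) :
    Finsupp.single i 2 + α ∈ adiniExponents d := by
  intro k l hle
  have eq_of_two_le {j : Fin d} (hj : 2 ≤ (Finsupp.single i 2 : Fin d →₀ ℕ) j + α j) : j = i := by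
    by_contra hne
    rw [Finsupp.single_eq_of_ne hne, zero_add] at hj
    exact absurd (hα j) (by omega)
  obtain rfl : k = i := eq_of_two_le (le_trans (by simp) (hle k))
  obtain rfl : l = k := eq_of_two_le (le_trans (by simp) (hle l))
  have hle_l := hle l
  simp only [Finsupp.add_apply, Finsupp.single_eq_same] at hle_l
  exact absurd (hα l) (by omega)

lemma PA_le_restrictSupport : PA d ≤ restrictSupport ℝ (adiniExponents d) := by
  refine sup_le ?_ (Submodule.span_le.2 ?_)
  · rw [Q1_eq_restrictSupport]
    refine restrictSupport_mono _ fun α hα i j hle => ?_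
    have hle_i := hle i
    simp only [Finsupp.add_apply, Finsupp.single_eq_same] at hle_i
    exact absurd (hα i) (by omega)
  · rintro _ ⟨i, q, hq, rfl⟩
    rw [SetLike.mem_coe, mem_restrictSupport_iff]
    intro γ hγ
    rw [SetLike.mem_coe, mem_support_iff, X_pow_eq_monomial, coeff_monomial_mul', one_mul,
      ite_ne_right_iff] at hγ
    rw [← add_tsub_cancel_of_le hγ.1]
    exact single_add_mem_adiniExponents (mem_Q1_iff.1 hq _ (mem_support_iff.2 hγ.2)) i

lemma monomial_mem_PA {α : Fin d →₀ ℕ} (hα : α ∈ adiniExponents d) : monomial α (1 : ℝ) ∈ PA d := by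
  by_cases hle : ∀ i, α i ≤ 1
  · exact Submodule.mem_sup_left (Submodule.subset_span ⟨α, hle, rfl⟩)
  · push Not at hle
    obtain ⟨i, hi⟩ := hle
    obtain ⟨β, rfl⟩ := exists_add_of_le (Finsupp.single_le_iff.2 (Nat.succ_le_of_lt hi))
    refine Submodule.mem_sup_right (Submodule.subset_span
      ⟨i, monomial β 1, Submodule.subset_span ⟨β, fun j => ?_, rfl⟩, ?_⟩)
    · by_contra! hj
      exact hα i j (add_le_add_right (Finsupp.single_le_iff.2 hj) _)
    · rw [X_pow_eq_monomial, monomial_mul, one_mul]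

lemma PA_eq_restrictSupport : PA d = restrictSupport ℝ (adiniExponents d) := by
  refine le_antisymm PA_le_restrictSupport ?_
  rw [restrictSupport_eq_span, Submodule.span_le]
  rintro _ ⟨α, hα, rfl⟩
  exact monomial_mem_PA hα

lemma mem_PA_iff {v : MvPolynomial (Fin d) ℝ} :
    v ∈ PA d ↔ ∀ α ∈ v.support, ∀ i j, ¬ Finsupp.single i 2 + Finsupp.single j 2 ≤ α := by
  rw [PA_eq_restrictSupport]
  rfl

lemma mem_PA_of_totalDegree_le_three {v : MvPolynomial (Fin d) ℝ} (hv : v.totalDegree ≤ 3) :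
    v ∈ PA d := by
  refine mem_PA_iff.2 fun α hα i j hle => ?_
  have hdegree : α.degree ≤ 3 := (le_totalDegree hα).trans hv
  have hfour := (Finsupp.degree_mono hle).trans hdegree
  simp at hfour

lemma pderiv_pderiv_mem_Q1 {v : MvPolynomial (Fin d) ℝ} (hv : v ∈ PA d) (i : Fin d) :
    pderiv i (pderiv i v) ∈ Q1 d := by
  refine mem_Q1_iff.2 fun α hα j => ?_
  rw [mem_support_iff, coeff_pderiv_pderiv_self] at hα
  by_contra! hj
  refine mem_PA_iff.1 hv _ (mem_support_iff.2 (left_ne_zero_of_mul hα)) j i ?_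
  exact add_le_add_left (Finsupp.single_le_iff.2 hj) _

lemma pderiv_pderiv_eq_zero_of_mem_Q1 {q : MvPolynomial (Fin d) ℝ} (hq : q ∈ Q1 d) (i : Fin d) :
    pderiv i (pderiv i q) = 0 := by
  ext α
  rw [coeff_pderiv_pderiv_self, coeff_zero, mul_eq_zero]
  refine Or.inl (notMem_support_iff.1 fun hα => ?_)
  have := mem_Q1_iff.1 hq _ hα i
  simp at this

lemma mem_Q1_of_pderiv_pderiv_eq_zero {q : MvPolynomial (Fin d) ℝ}
    (hq : ∀ i, pderiv i (pderiv i q) = 0) : q ∈ Q1 d := by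
  refine mem_Q1_iff.2 fun α hα i => ?_
  by_contra! hi
  obtain ⟨β, rfl⟩ := exists_add_of_le (Finsupp.single_le_iff.2 (Nat.succ_le_of_lt hi))
  have hcoeff := coeff_pderiv_pderiv_self i q β
  rw [hq i, coeff_zero, add_comm β, eq_comm, mul_eq_zero] at hcoeff
  exact hcoeff.elim (mem_support_iff.1 hα) (by positivity)

lemma degreeOf_le_three_of_mem_PA {v : MvPolynomial (Fin d) ℝ} (hv : v ∈ PA d) (i : Fin d) :
    v.degreeOf i ≤ 3 := by
  refine degreeOf_le_iff.2 fun α hα => ?_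
  by_contra! hi
  refine mem_PA_iff.1 hv α hα i i ?_
  rwa [← Finsupp.single_add, Finsupp.single_le_iff]

end ShapeFunctions

section Unisolvence

variable {d : ℕ} {c h : Fin d → ℝ}

/-- All Adini degrees of freedom of `p`, namely its values and first derivatives at the vertices of
the rectangle, vanish. -/
def HasZeroVertexData (c h : Fin d → ℝ) (p : MvPolynomial (Fin d) ℝ) : Prop :=
  ∀ a, IsVertex c h a → eval a p = 0 ∧ ∀ k, eval a (pderiv k p) = 0

lemma isVertex_update_reflection {a : Fin d → ℝ} (ha : IsVertex c h a) (i : Fin d) :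
    IsVertex c h (Function.update a i (2 * c i - a i)) := by
  intro j
  rcases eq_or_ne j i with rfl | hj
  · rw [Function.update_self]
    exact (ha j).symm.imp (fun hj => by linarith) fun hj => by linarith
  · simpa [hj] using ha j

lemma eq_zero_of_mem_Q1_of_eval_vertex_eq_zero (hh : ∀ i, h i ≠ 0)
    {q : MvPolynomial (Fin d) ℝ} (hq : q ∈ Q1 d) (hvertex : ∀ a, IsVertex c h a → eval a q = 0) :
    q = 0 := by
  refine eq_zero_of_eval_zero_at_prod_finset q (fun i => {c i - h i, c i + h i}) (fun i => ?_)
    fun x hx => hvertex x fun i => by simpa using hx i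
  have hne : c i - h i ≠ c i + h i := fun heq => hh i (by linarith)
  rw [Finset.card_pair hne, Nat.lt_succ_iff, degreeOf_le_iff]
  exact fun α hα => mem_Q1_iff.1 hq α hα i

lemma eval_pderiv_pderiv_vertex_eq_zero (hh : ∀ i, h i ≠ 0) {z : MvPolynomial (Fin d) ℝ}
    (hz : z ∈ PA d) (hdata : HasZeroVertexData c h z) {a : Fin d → ℝ} (ha : IsVertex c h a)
    (i : Fin d) : eval a (pderiv i (pderiv i z)) = 0 := by
  have hhermite := sq_mul_eval_pderiv_pderiv_of_degreeOf_le_three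
    (degreeOf_le_three_of_mem_PA hz i) a (2 * c i - a i)
  obtain ⟨hval, hderiv⟩ := hdata a ha
  obtain ⟨hval', hderiv'⟩ := hdata _ (isVertex_update_reflection ha i)
  rw [hval, hval', hderiv, hderiv'] at hhermite
  have hne : a i - (2 * c i - a i) ≠ 0 := fun heq =>
    hh i (by rcases ha i with hai | hai <;> linarith)
  simpa [hne] using hhermite

lemma eq_zero_of_mem_PA_of_hasZeroVertexData (hh : ∀ i, h i ≠ 0) {z : MvPolynomial (Fin d) ℝ}
    (hz : z ∈ PA d) (hdata : HasZeroVertexData c h z) : z = 0 := by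
  have hpderiv (i : Fin d) : pderiv i (pderiv i z) = 0 :=
    eq_zero_of_mem_Q1_of_eval_vertex_eq_zero hh (pderiv_pderiv_mem_Q1 hz i)
      fun a ha => eval_pderiv_pderiv_vertex_eq_zero hh hz hdata ha i
  exact eq_zero_of_mem_Q1_of_eval_vertex_eq_zero hh (mem_Q1_of_pderiv_pderiv_eq_zero hpderiv)
    fun a ha => (hdata a ha).1

end Unisolvence

section Bubbles

variable {d : ℕ} {c h : Fin d → ℝ}

/-- The edge bubble `(x_i - c_i)² - h_i²`, which vanishes on the two faces of the rectangle
orthogonal to the `i`-th axis. -/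
noncomputable def bubble (c h : Fin d → ℝ) (i : Fin d) : MvPolynomial (Fin d) ℝ :=
  (X i - C (c i)) ^ 2 - C (h i ^ 2)

lemma eval_bubble_eq_zero {i : Fin d} {x : Fin d → ℝ}
    (hx : x i = c i - h i ∨ x i = c i + h i) : eval x (bubble c h i) = 0 := by
  rcases hx with hx | hx <;> simp [bubble, hx]

lemma pderiv_bubble_of_ne {i j : Fin d} (hij : i ≠ j) : pderiv i (bubble c h j) = 0 := by
  simp [bubble, pderiv_X_of_ne hij.symm]

lemma pderiv_bubble_self (i : Fin d) :
    pderiv i (bubble c h i) = C 2 * (X i - C (c i)) := by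
  simp only [bubble, map_sub, pderiv_pow, pderiv_X_self, pderiv_C, map_ofNat]
  ring

lemma pderiv_pderiv_bubble_self (i : Fin d) :
    pderiv i (pderiv i (bubble c h i)) = C 2 := by
  simp [pderiv_bubble_self]

lemma pderiv_pderiv_bubble_mul_bubble_self (i : Fin d) :
    pderiv i (pderiv i (bubble c h i * bubble c h i)) =
      C 12 * bubble c h i + C (8 * h i ^ 2) := by
  simp only [pderiv_mul, map_add, pderiv_bubble_self, pderiv_C, map_sub, pderiv_X_self]
  simp only [bubble, map_ofNat, map_mul, map_pow]
  ring

lemma pderiv_pderiv_bubble_mul_bubble_of_ne {i j : Fin d} (hij : i ≠ j) :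
    pderiv i (pderiv i (bubble c h i * bubble c h j)) = C 2 * bubble c h j := by
  simp only [pderiv_mul, pderiv_bubble_of_ne hij, mul_zero, add_zero, pderiv_pderiv_bubble_self]

lemma pderiv_bubble_mul_bubble_of_ne {i j k : Fin d} (hki : k ≠ i) (hkj : k ≠ j) :
    pderiv k (bubble c h i * bubble c h j) = 0 := by
  rw [pderiv_mul, pderiv_bubble_of_ne hki, pderiv_bubble_of_ne hkj, zero_mul, mul_zero, add_zero]

lemma bubble_dvd_pderiv_bubble_mul_bubble (i j : Fin d) :
    bubble c h i ∣ pderiv j (bubble c h i * bubble c h j) := by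
  rcases eq_or_ne j i with rfl | hji
  · rw [pderiv_mul, mul_comm]
    exact dvd_add (dvd_mul_right _ _) (dvd_mul_right _ _)
  · rw [pderiv_mul, pderiv_bubble_of_ne hji, zero_mul, zero_add]
    exact dvd_mul_right _ _

/-- The span of the products of two edge bubbles, where the two bubbles may coincide. It contains
the interpolation errors of the polynomials of degree at most four. -/
noncomputable def bubbleProducts (c h : Fin d → ℝ) : Submodule ℝ (MvPolynomial (Fin d) ℝ) :=
  Submodule.span ℝ (Set.range fun ij : Fin d × Fin d => bubble c h ij.1 * bubble c h ij.2)

lemma bubble_mul_bubble_mem_bubbleProducts (i j : Fin d) :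
    bubble c h i * bubble c h j ∈ bubbleProducts c h :=
  Submodule.subset_span ⟨(i, j), rfl⟩

lemma hasZeroVertexData_of_mem_bubbleProducts {e : MvPolynomial (Fin d) ℝ}
    (he : e ∈ bubbleProducts c h) : HasZeroVertexData c h e := by
  intro a ha
  induction he using Submodule.span_induction with
  | mem _ hmem =>
    obtain ⟨⟨i, j⟩, rfl⟩ := hmem
    simp [eval_bubble_eq_zero (ha _)]
  | zero => simp
  | add e f _ _ he hf => simp [he, hf]
  | smul r e _ he => simp [he]

lemma totalDegree_X_sq_sub_bubble_le (i : Fin d) :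
    (X i ^ 2 - bubble c h i).totalDegree ≤ 1 := by
  have hlinear : X i ^ 2 - bubble c h i = C (2 * c i) * X i + C (h i ^ 2 - c i ^ 2) := by
    simp only [bubble, map_mul, map_sub, map_pow, map_ofNat]
    ring
  rw [hlinear]
  refine (totalDegree_add _ _).trans (max_le ((totalDegree_mul _ _).trans ?_) ?_)
  · rw [totalDegree_C, totalDegree_X]
  · rw [totalDegree_C]
    exact zero_le_one

lemma totalDegree_bubble_le (i : Fin d) : (bubble c h i).totalDegree ≤ 2 := by
  rw [← sub_sub_cancel (X i ^ 2) (bubble c h i)]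
  refine (totalDegree_sub _ _).trans (max_le ?_ ?_)
  · rw [totalDegree_X_pow]
  · exact (totalDegree_X_sq_sub_bubble_le i).trans one_le_two

lemma X_sq_mul_X_sq_mem_PA_sup_bubbleProducts (i j : Fin d) :
    (X i ^ 2 * X j ^ 2 : MvPolynomial (Fin d) ℝ) ∈ PA d ⊔ bubbleProducts c h := by
  have hsplit : (X i ^ 2 * X j ^ 2 : MvPolynomial (Fin d) ℝ) =
      (X i ^ 2 * (X j ^ 2 - bubble c h j) + (X i ^ 2 - bubble c h i) * bubble c h j) +
        bubble c h i * bubble c h j := by ring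
  rw [hsplit]
  refine Submodule.add_mem_sup (mem_PA_of_totalDegree_le_three ?_)
    (bubble_mul_bubble_mem_bubbleProducts i j)
  refine (totalDegree_add _ _).trans (max_le ?_ ?_)
  · exact (totalDegree_mul _ _).trans
      (add_le_add (totalDegree_X_pow i 2).le (totalDegree_X_sq_sub_bubble_le j))
  · exact (totalDegree_mul _ _).trans
      (add_le_add (totalDegree_X_sq_sub_bubble_le i) (totalDegree_bubble_le j))

lemma mem_PA_sup_bubbleProducts_of_totalDegree_le_four {u : MvPolynomial (Fin d) ℝ}
    (hu : u.totalDegree ≤ 4) : u ∈ PA d ⊔ bubbleProducts c h := by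
  rw [u.as_sum]
  refine Submodule.sum_mem _ fun α hα => ?_
  rw [← mul_one (coeff α u), ← smul_eq_mul, ← smul_monomial]
  refine Submodule.smul_mem _ _ ?_
  by_cases hadini : α ∈ adiniExponents d
  · exact Submodule.mem_sup_left (monomial_mem_PA hadini)
  · simp only [adiniExponents, Set.mem_ofPred_eq, not_forall, not_not] at hadini
    obtain ⟨i, j, hle⟩ := hadini
    obtain ⟨β, rfl⟩ := exists_add_of_le hle
    have hdegree : (Finsupp.single i 2 + Finsupp.single j 2 + β).degree ≤ 4 :=
      (le_totalDegree hα).trans hu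
    have hβ : β = 0 := by
      simp only [map_add, Finsupp.degree_single] at hdegree
      exact (Finsupp.degree_eq_zero_iff β).1 (by omega)
    simpa [hβ, X_pow_eq_monomial, monomial_mul] using
      X_sq_mul_X_sq_mem_PA_sup_bubbleProducts (c := c) (h := h) i j

lemma sub_mem_bubbleProducts_of_hasZeroVertexData (hh : ∀ i, h i ≠ 0)
    {u w : MvPolynomial (Fin d) ℝ} (hu : u.totalDegree ≤ 4) (hw : w ∈ PA d)
    (hdata : HasZeroVertexData c h (u - w)) : u - w ∈ bubbleProducts c h := by
  obtain ⟨p, hp, e, he, rfl⟩ :=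
    Submodule.mem_sup.1 (mem_PA_sup_bubbleProducts_of_totalDegree_le_four (c := c) (h := h) hu)
  have hpw : HasZeroVertexData c h (p - w) := by
    intro a ha
    have hdata_e := hasZeroVertexData_of_mem_bubbleProducts he a ha
    simpa [add_sub_right_comm p e w, hdata_e.1, hdata_e.2] using hdata a ha
  have hzero := eq_zero_of_mem_PA_of_hasZeroVertexData hh ((PA d).sub_mem hp hw) hpw
  rwa [add_sub_right_comm, hzero, zero_add]

end Bubbles

section BoxIntegral

variable {d : ℕ} {c h : Fin d → ℝ} {q : MvPolynomial (Fin d) ℝ}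

lemma box_eq_Icc : box c h = Set.Icc (c - h) (c + h) :=
  Set.pi_univ_Icc _ _

lemma integrableOn_eval_box (p : MvPolynomial (Fin d) ℝ) :
    IntegrableOn (fun x => eval x p) (box c h) := by
  rw [box_eq_Icc]
  exact (continuous_eval p).integrableOn_Icc

/-- Integration over the rectangle, as a linear functional on polynomials. -/
noncomputable def boxIntegral (c h : Fin d → ℝ) : MvPolynomial (Fin d) ℝ →ₗ[ℝ] ℝ where
  toFun p := ∫ x in box c h, eval x p
  map_add' p q := by
    simp only [map_add]
    exact integral_add (integrableOn_eval_box p) (integrableOn_eval_box q)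
  map_smul' r p := by
    simp only [smul_eval]
    exact integral_const_mul r _

lemma boxIntegral_mul (p q : MvPolynomial (Fin d) ℝ) :
    boxIntegral c h (p * q) = ∫ x in box c h, eval x p * eval x q := by
  simp only [boxIntegral, LinearMap.coe_mk, AddHom.coe_mk, map_mul]

lemma boxIntegral_C_mul (r : ℝ) (p : MvPolynomial (Fin d) ℝ) :
    boxIntegral c h (C r * p) = r * boxIntegral c h p := by
  rw [← smul_eq_C_mul, map_smul, smul_eq_mul]

lemma boxIntegral_pderiv_eq_zero_of_bubble_dvd (hh : 0 ≤ h) {i : Fin d}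
    {p : MvPolynomial (Fin d) ℝ} (hp : bubble c h i ∣ p) : boxIntegral c h (pderiv i p) = 0 := by
  have hface {x : Fin d → ℝ} (hx : x i = c i - h i ∨ x i = c i + h i) : eval x p = 0 :=
    zero_dvd_iff.1 (eval_bubble_eq_zero hx ▸ map_dvd (eval x) hp)
  change ∫ x in box c h, eval x (pderiv i p) = 0
  rw [box_eq_Icc]
  exact integral_Icc_eval_pderiv_eq_zero ((sub_le_self c hh).trans (le_add_of_nonneg_right hh))
    (fun x hx => hface (Or.inl hx)) fun x hx => hface (Or.inr hx)

lemma boxIntegral_pderiv_mul_of_bubble_dvd (hh : 0 ≤ h) {i : Fin d}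
    {p : MvPolynomial (Fin d) ℝ} (hp : bubble c h i ∣ p) (q : MvPolynomial (Fin d) ℝ) :
    boxIntegral c h (pderiv i p * q) = -boxIntegral c h (p * pderiv i q) := by
  have hzero := boxIntegral_pderiv_eq_zero_of_bubble_dvd hh (hp.mul_right q)
  rw [pderiv_mul, map_add] at hzero
  exact eq_neg_of_add_eq_zero_left hzero

lemma boxIntegral_pderiv_pderiv_bubble_mul_bubble_mul (hh : 0 ≤ h) (i j : Fin d)
    (q : MvPolynomial (Fin d) ℝ) :
    boxIntegral c h (pderiv i (pderiv j (bubble c h i * bubble c h j)) * q) =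
      boxIntegral c h (bubble c h i * bubble c h j * pderiv j (pderiv i q)) := by
  rw [boxIntegral_pderiv_mul_of_bubble_dvd hh (bubble_dvd_pderiv_bubble_mul_bubble i j),
    boxIntegral_pderiv_mul_of_bubble_dvd hh (dvd_mul_left _ _), neg_neg]

lemma boxIntegral_bubble_mul_of_pderiv_pderiv_eq_zero (hh : 0 ≤ h) {i : Fin d}
    (hq : pderiv i (pderiv i q) = 0) :
    boxIntegral c h (bubble c h i * q) = -(2 * h i ^ 2 / 3) * boxIntegral c h q := by
  have hzero := boxIntegral_pderiv_pderiv_bubble_mul_bubble_mul (c := c) hh i i q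
  rw [hq, mul_zero, map_zero, pderiv_pderiv_bubble_mul_bubble_self, add_mul, map_add, mul_assoc,
    boxIntegral_C_mul, boxIntegral_C_mul] at hzero
  linarith

lemma boxIntegral_pderiv_pderiv_mul_eq_zero_of_ne (hh : 0 ≤ h) {e : MvPolynomial (Fin d) ℝ}
    (he : e ∈ bubbleProducts c h) {k l : Fin d} (hkl : k ≠ l)
    (hq : pderiv k (pderiv l q) = 0) : boxIntegral c h (pderiv k (pderiv l e) * q) = 0 := by
  induction he using Submodule.span_induction with
  | zero => simp
  | add e f _ _ he hf => simp [add_mul, he, hf]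
  | smul r e _ he => simp [he]
  | mem _ hmem =>
    obtain ⟨⟨i, j⟩, rfl⟩ := hmem
    dsimp only
    by_cases hk : k ≠ i ∧ k ≠ j
    · rw [pderiv_pderiv_comm, pderiv_bubble_mul_bubble_of_ne hk.1 hk.2, map_zero, zero_mul,
        map_zero]
    by_cases hl : l ≠ i ∧ l ≠ j
    · rw [pderiv_bubble_mul_bubble_of_ne hl.1 hl.2, map_zero, zero_mul, map_zero]
    have hprod : bubble c h i * bubble c h j = bubble c h k * bubble c h l := by
      grind
    rw [hprod, boxIntegral_pderiv_pderiv_bubble_mul_bubble_mul hh, pderiv_pderiv_comm, hq, mul_zero,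
      map_zero]

lemma boxIntegral_pderiv_pderiv_bubble_mul_bubble_mul_eq_neg_sum (hh : 0 ≤ h) {k : Fin d}
    (j : Fin d) (hq : ∀ m, pderiv m (pderiv m q) = 0) :
    boxIntegral c h (pderiv k (pderiv k (bubble c h k * bubble c h j)) * q) =
      -∑ m ∈ Finset.univ.erase k, h m ^ 2 / 3 * boxIntegral c h
        (pderiv m (pderiv m (pderiv k (pderiv k (bubble c h k * bubble c h j)))) * q) := by
  rcases eq_or_ne k j with rfl | hkj
  · rw [boxIntegral_pderiv_pderiv_bubble_mul_bubble_mul hh, hq, mul_zero, map_zero, eq_comm,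
      neg_eq_zero]
    refine Finset.sum_eq_zero fun m hm => ?_
    rw [pderiv_pderiv_bubble_mul_bubble_self, map_add, pderiv_C_mul, pderiv_C,
      pderiv_bubble_of_ne (Finset.ne_of_mem_erase hm), mul_zero, add_zero, map_zero, zero_mul,
      map_zero, mul_zero]
  · rw [pderiv_pderiv_bubble_mul_bubble_of_ne hkj, mul_assoc, boxIntegral_C_mul,
      boxIntegral_bubble_mul_of_pderiv_pderiv_eq_zero hh (hq j), Finset.sum_eq_single j]
    · rw [pderiv_C_mul, pderiv_C_mul, pderiv_pderiv_bubble_self, mul_assoc, boxIntegral_C_mul,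
        boxIntegral_C_mul]
      ring
    · intro m _ hmj
      rw [pderiv_C_mul, pderiv_bubble_of_ne hmj, mul_zero, map_zero, zero_mul, map_zero, mul_zero]
    · exact fun hj => absurd (Finset.mem_erase.2 ⟨hkj.symm, Finset.mem_univ j⟩) hj

lemma boxIntegral_pderiv_pderiv_mul_eq_neg_sum (hh : 0 ≤ h) {e : MvPolynomial (Fin d) ℝ}
    (he : e ∈ bubbleProducts c h) (k : Fin d) (hq : ∀ m, pderiv m (pderiv m q) = 0) :
    boxIntegral c h (pderiv k (pderiv k e) * q) =
      -∑ m ∈ Finset.univ.erase k, h m ^ 2 / 3 *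
        boxIntegral c h (pderiv m (pderiv m (pderiv k (pderiv k e))) * q) := by
  induction he using Submodule.span_induction with
  | zero => simp
  | add e f _ _ he hf =>
    simp only [map_add, add_mul, mul_add, Finset.sum_add_distrib, neg_add, he, hf]
  | smul r e _ he =>
    simp only [Derivation.map_smul, LinearMap.map_smul, smul_mul_assoc, he, smul_eq_mul, mul_neg,
      Finset.mul_sum, mul_left_comm r]
  | mem _ hmem =>
    obtain ⟨⟨i, j⟩, rfl⟩ := hmem
    dsimp only
    by_cases hki : k = i
    · subst hki
      exact boxIntegral_pderiv_pderiv_bubble_mul_bubble_mul_eq_neg_sum hh j hq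
    by_cases hkj : k = j
    · subst hkj
      rw [mul_comm (bubble c h i)]
      exact boxIntegral_pderiv_pderiv_bubble_mul_bubble_mul_eq_neg_sum hh i hq
    · simp [pderiv_bubble_mul_bubble_of_ne hki hkj]

end BoxIntegral

section InterpolationError

variable {d : ℕ}

lemma pderiv_pderiv_pderiv_pderiv_eq_zero_of_mem_PA {v : MvPolynomial (Fin d) ℝ} (hv : v ∈ PA d)
    (i j : Fin d) : pderiv i (pderiv i (pderiv j (pderiv j v))) = 0 :=
  pderiv_pderiv_eq_zero_of_mem_Q1 (pderiv_pderiv_mem_Q1 hv j) i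

lemma sum_boxIntegral_pderiv_pderiv_mul_eq_neg_sum {c h : Fin d → ℝ} (hh : 0 ≤ h)
    {e v : MvPolynomial (Fin d) ℝ} (he : e ∈ bubbleProducts c h) (hv : v ∈ PA d) (k : Fin d) :
    ∑ l, boxIntegral c h (pderiv k (pderiv l e) * pderiv k (pderiv l v)) =
      -∑ m ∈ Finset.univ.erase k, h m ^ 2 / 3 * boxIntegral c h
        (pderiv k (pderiv k (pderiv m (pderiv m e))) * pderiv k (pderiv k v)) := by
  have hoff (l : Fin d) (hl : l ≠ k) :
      boxIntegral c h (pderiv k (pderiv l e) * pderiv k (pderiv l v)) = 0 := by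
    refine boxIntegral_pderiv_pderiv_mul_eq_zero_of_ne hh he hl.symm ?_
    rw [pderiv_pderiv_comm l k]
    exact pderiv_pderiv_pderiv_pderiv_eq_zero_of_mem_PA hv k l
  rw [Finset.sum_eq_single k (fun l _ => hoff l) (by simp),
    boxIntegral_pderiv_pderiv_mul_eq_neg_sum hh he k fun m =>
      pderiv_pderiv_pderiv_pderiv_eq_zero_of_mem_PA hv m k]
  simp only [pderiv_pderiv_pderiv_pderiv_comm k]

end InterpolationError

/-- Lemma 2.2: for `u` of total degree at most 4, `v ∈ P_A`, and `w ∈ P_A`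
the Adini canonical interpolant of `u` (matching `u` and `∇u` at every vertex of `K`),
`Σ_{k,l} ∫_K ∂²(u−w)/∂x_k∂x_l ∂²v/∂x_k∂x_l = − Σ_i Σ_{j≠i} (h_j²/3) ∫_K ∂⁴u/∂x_i²∂x_j² ∂²v/∂x_i²`. -/
theorem adini_interpolation_identity (d : ℕ) (hd : 1 ≤ d)
    (c h : Fin d → ℝ) (hh : ∀ i, 0 < h i)
    (u : MvPolynomial (Fin d) ℝ) (hu : u.totalDegree ≤ 4)
    (v : MvPolynomial (Fin d) ℝ) (hv : v ∈ PA d)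
    (w : MvPolynomial (Fin d) ℝ) (hw : w ∈ PA d)
    (hmatch : ∀ a : Fin d → ℝ, IsVertex c h a →
      eval a w = eval a u ∧ ∀ k : Fin d, eval a (pderiv k w) = eval a (pderiv k u)) :
    ∑ k : Fin d, ∑ l : Fin d,
      ∫ x in box c h,
        eval x (pderiv k (pderiv l (u - w))) * eval x (pderiv k (pderiv l v)) =
    - ∑ i : Fin d, ∑ j ∈ Finset.univ.erase i,
        (h j ^ 2 / 3) *
          ∫ x in box c h,
            eval x (pderiv i (pderiv i (pderiv j (pderiv j u)))) *
              eval x (pderiv i (pderiv i v)) := by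
  have hdata : HasZeroVertexData c h (u - w) := fun a ha => by
    obtain ⟨hval, hgrad⟩ := hmatch a ha
    simp [hval, hgrad]
  have herror : u - w ∈ bubbleProducts c h :=
    sub_mem_bubbleProducts_of_hasZeroVertexData (fun i => (hh i).ne') hu hw hdata
  have hfourth (i j : Fin d) : pderiv i (pderiv i (pderiv j (pderiv j u))) =
      pderiv i (pderiv i (pderiv j (pderiv j (u - w)))) := by
    simp only [map_sub, pderiv_pderiv_pderiv_pderiv_eq_zero_of_mem_PA hw, sub_zero]
  simp only [← boxIntegral_mul, hfourth]
  rw [← Finset.sum_neg_distrib]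
  exact Finset.sum_congr rfl fun k _ =>
    sum_boxIntegral_pderiv_pderiv_mul_eq_neg_sum (fun i => (hh i).le) herror hv k
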